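/- Let L be a countable linear order and α an ordinal such that for every x ∈ L, the initial segment L_{<x} = {z ∈ L : z < x} has Scott rank strictly less than α. Then SR(L) ≤ α + 4. -/

import Mathlib

/-- The standard back-and-forth relation between tuples in linear orders, defined by
transfinite recursion: `bfT 0` holds iff the tuples satisfy the same atomic formulas;
`bfT ξ L M a b` iff the tuples satisfy the same atomic formulas and for every `γ < ξ`
and every tuple `d` in `M` there is a tuple `c` in `L` with `bfT γ M L (b ++ d) (a ++ c)`. -/
def bfT (ξ : Ordinal) (L : Type) [LinearOrder L] (M : Type) [LinearOrder M]
    {k : ℕ} (a : Fin k → L) (b : Fin k → M) : Prop :=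
  (∀ i j, a i ≤ a j ↔ b i ≤ b j) ∧
  ∀ γ < ξ, ∀ (l : ℕ) (d : Fin l → M), ∃ c : Fin l → L,
    bfT γ M L (Fin.append b d) (Fin.append a c)
termination_by ξ

/-- `rk L a` is the least ordinal `α` such that every tuple `b` with
`(L, a) ≤_α (L, b)` is automorphic to `a`. -/
noncomputable def rk (L : Type) [LinearOrder L] {k : ℕ} (a : Fin k → L) : Ordinal :=
  sInf {α | ∀ b : Fin k → L, bfT α L L a b → ∃ f : L ≃o L, ∀ i, f (a i) = b i}

/-- The Scott rank of a linear order: the least ordinal strictly greater than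
`rk L a` for every finite tuple `a` in `L`. -/
noncomputable def scottRank (L : Type) [LinearOrder L] : Ordinal :=
  sInf {α | ∀ (k : ℕ) (a : Fin k → L), rk L a < α}

/-!
A tuple back-and-forth equivalent to another up to level `α` is carried to it by isomorphisms of the
closed initial segments above it, because open initial segments have Scott rank below `α`. It
remains to turn such local isomorphisms into an automorphism of `L`. Call `v` a copy of `x` over `a`
if `(L_{≤x}, a) ≅ (L_{≤v}, a)`.

If the copies of some `x` over `a` are unbounded, then `(L_{≤v}, a) ≅ (L_{≤y}, b)` for some `y ≤ v`.
When `b` lies above `a`, this isomorphism maps the lower set generated by the orbit of `max a` onto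
itself, as in Lindenbaum's lemma, and the identity extends it to the rest of `L`.

If the copies of each `x` are bounded, the lower sets they generate are invariant under isomorphisms
of longer segments. They exhaust `L`, so isomorphisms of longer and longer segments, which need not
agree with each other, can be glued along the layers between successive lower sets.
-/

section OrderIso

variable {L M : Type*} [LinearOrder L] [LinearOrder M]

theorem exists_orderIso_of_biTotal {P Q : Type*} [PartialOrder P] [PartialOrder Q]
    {R : P → Q → Prop} (hR : Relator.BiTotal R)
    (hle : ∀ {u v u' v'}, R u v → R u' v' → (u ≤ u' ↔ v ≤ v')) :
    ∃ F : P ≃o Q, ∀ u v, R u v → F u = v := by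
  have heq : ∀ {u v u' v'}, R u v → R u' v' → (u = u' ↔ v = v') := fun h h' => by
    rw [le_antisymm_iff, le_antisymm_iff, hle h h', hle h' h]
  choose f hf using hR.1
  choose g hg using hR.2
  exact ⟨{ toFun := f
           invFun := g
           left_inv u := (heq (hg _) (hf u)).2 rfl
           right_inv v := (heq (hf _) (hg v)).1 rfl
           map_rel_iff' := (hle (hf _) (hf _)).symm },
    fun u v h => (heq (hf u) h).1 rfl⟩

theorem exists_orderIso_Iic_of_Iio {x : L} {y : M} (f : Set.Iio x ≃o Set.Iio y) :
    ∃ F : Set.Iic x ≃o Set.Iic y, (F ⟨x, le_rfl⟩ : M) = y ∧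
      ∀ v : Set.Iio x, (F ⟨v, v.2.le⟩ : M) = f v := by
  let R : Set.Iic x → Set.Iic y → Prop := fun v w =>
    (∃ u : Set.Iio x, (v : L) = u ∧ (w : M) = f u) ∨ ((v : L) = x ∧ (w : M) = y)
  have hR : Relator.BiTotal R := by
    refine ⟨fun v => ?_, fun w => ?_⟩
    · rcases lt_or_eq_of_le v.2 with hv | hv
      · exact ⟨⟨f ⟨v, hv⟩, (f ⟨v, hv⟩).2.le⟩, .inl ⟨⟨v, hv⟩, rfl, rfl⟩⟩
      · exact ⟨⟨y, le_rfl⟩, .inr ⟨hv, rfl⟩⟩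
    · rcases lt_or_eq_of_le w.2 with hw | hw
      · exact ⟨⟨f.symm ⟨w, hw⟩, (f.symm ⟨w, hw⟩).2.le⟩, .inl ⟨f.symm ⟨w, hw⟩, rfl, by simp⟩⟩
      · exact ⟨⟨x, le_rfl⟩, .inr ⟨rfl, hw⟩⟩
  obtain ⟨F, hF⟩ := exists_orderIso_of_biTotal hR (by
    rintro v w v' w' (⟨u, hv, hw⟩ | ⟨hv, hw⟩) (⟨u', hv', hw'⟩ | ⟨hv', hw'⟩) <;>
      rw [← Subtype.coe_le_coe, ← Subtype.coe_le_coe, hv, hw, hv', hw']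
    · exact f.le_iff_le.symm
    · exact iff_of_true u.2.le (f u).2.le
    · exact iff_of_false u'.2.not_ge (f u').2.not_ge
    · exact iff_of_true le_rfl le_rfl)
  exact ⟨F, congrArg Subtype.val (hF _ ⟨y, le_rfl⟩ (.inr ⟨rfl, rfl⟩)),
    fun v => congrArg Subtype.val (hF _ ⟨f v, (f v).2.le⟩ (.inl ⟨v, rfl, rfl⟩))⟩

theorem lt_of_mem_lowerSet_of_notMem {W : LowerSet L} {v w : L} (hv : v ∈ W) (hw : w ∉ W) :
    v < w :=
  not_le.1 fun hle => hw (W.lower hle hv)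

theorem lt_of_minimal_mem_lowerSet {κ : Type*} [Preorder κ] {W : κ → LowerSet L} {v w : L}
    {m n : κ} (hv : Minimal (v ∈ W ·) m) (hw : Minimal (w ∈ W ·) n) (hmn : m < n) : v < w :=
  lt_of_mem_lowerSet_of_notMem hv.prop (hw.not_prop_of_lt hmn)

theorem exists_orderIso_of_exhaustion {κ : Type*} [LinearOrder κ] [WellFoundedLT κ]
    {W : κ → LowerSet L} {Z : κ → LowerSet M} {S : κ → Set L} {T : κ → Set M}
    (f : ∀ n, S n ≃o T n) (hWS : ∀ n, (W n : Set L) ⊆ S n) (hZT : ∀ n, (Z n : Set M) ⊆ T n)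
    (hf : ∀ m n, m ≤ n → ∀ v : S n, (v : L) ∈ W m ↔ (f n v : M) ∈ Z m)
    (hW : ∀ v, ∃ n, v ∈ W n) (hZ : ∀ w, ∃ n, w ∈ Z n) :
    ∃ F : L ≃o M, ∀ v, ∃ n, ∃ hv : v ∈ S n, F v = f n ⟨v, hv⟩ := by
  let R : L → M → Prop := fun v w =>
    ∃ n, Minimal (v ∈ W ·) n ∧ Minimal (w ∈ Z ·) n ∧ ∃ hv : v ∈ S n, (f n ⟨v, hv⟩ : M) = w
  have minimal_iff : ∀ {n} (v : S n), Minimal ((v : L) ∈ W ·) n ↔ Minimal ((f n v : M) ∈ Z ·) n :=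
    fun {n} v => by
      simp only [minimal_iff_forall_lt]
      exact and_congr (hf n n le_rfl v)
        (forall₂_congr fun m hm => not_congr (hf m n hm.le v))
  have hR : Relator.BiTotal R := by
    refine ⟨fun v => ?_, fun w => ?_⟩
    · obtain ⟨n, hn⟩ := exists_minimal_of_wellFoundedLT _ (hW v)
      have hv := hWS n hn.prop
      exact ⟨f n ⟨v, hv⟩, n, hn, (minimal_iff ⟨v, hv⟩).1 hn, hv, rfl⟩
    · obtain ⟨n, hn⟩ := exists_minimal_of_wellFoundedLT _ (hZ w)
      obtain ⟨v, hv⟩ := (f n).surjective ⟨w, hZT n hn.prop⟩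
      have hvw : (f n v : M) = w := congrArg Subtype.val hv
      exact ⟨v, n, (minimal_iff v).2 (hvw ▸ hn), hn, v.2, hvw⟩
  obtain ⟨F, hF⟩ := exists_orderIso_of_biTotal hR (by
    rintro v w v' w' ⟨n, hvn, hwn, hv, rfl⟩ ⟨n', hvn', hwn', hv', rfl⟩
    rcases lt_trichotomy n n' with h | rfl | h
    · exact iff_of_true (lt_of_minimal_mem_lowerSet hvn hvn' h).le
        (lt_of_minimal_mem_lowerSet hwn hwn' h).le
    · exact ((f n).le_iff_le (x := ⟨v, hv⟩) (y := ⟨v', hv'⟩)).symm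
    · exact iff_of_false (lt_of_minimal_mem_lowerSet hvn' hvn h).not_ge
        (lt_of_minimal_mem_lowerSet hwn' hwn h).not_ge)
  refine ⟨F, fun v => ?_⟩
  obtain ⟨w, hvw⟩ := hR.1 v
  obtain ⟨n, -, -, hv, rfl⟩ := id hvw
  exact ⟨n, hv, hF _ _ hvw⟩

theorem exists_orderIso_extending_of_invariant_lowerSet {S T : Set L} (f : S ≃o T)
    {W : LowerSet L} (hWS : (W : Set L) ⊆ S) (hWT : (W : Set L) ⊆ T)
    (hf : ∀ v : S, (v : L) ∈ W ↔ (f v : L) ∈ W) :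
    ∃ F : L ≃o L, ∀ v : S, (v : L) ∈ W → F v = f v := by
  let R : L → L → Prop := fun v w =>
    (∃ u : S, (u : L) ∈ W ∧ v = u ∧ w = f u) ∨ (v ∉ W ∧ v = w)
  have hR : Relator.BiTotal R := by
    refine ⟨fun v => ?_, fun w => ?_⟩
    · by_cases hv : v ∈ W
      · exact ⟨f ⟨v, hWS hv⟩, .inl ⟨⟨v, hWS hv⟩, hv, rfl, rfl⟩⟩
      · exact ⟨v, .inr ⟨hv, rfl⟩⟩
    · by_cases hw : w ∈ W
      · obtain ⟨u, hu⟩ := f.surjective ⟨w, hWT hw⟩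
        have hwu : w = f u := by rw [hu]
        exact ⟨u, .inl ⟨u, (hf u).2 (hwu ▸ hw), rfl, hwu⟩⟩
      · exact ⟨w, .inr ⟨hw, rfl⟩⟩
  obtain ⟨F, hF⟩ := exists_orderIso_of_biTotal hR (by
    rintro v w v' w' (⟨u, hu, rfl, rfl⟩ | ⟨hv, rfl⟩) (⟨u', hu', rfl, rfl⟩ | ⟨hv', rfl⟩)
    · simp
    · exact iff_of_true (lt_of_mem_lowerSet_of_notMem hu hv').le
        (lt_of_mem_lowerSet_of_notMem ((hf u).1 hu) hv').le
    · exact iff_of_false (lt_of_mem_lowerSet_of_notMem hu' hv).not_ge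
        (lt_of_mem_lowerSet_of_notMem ((hf u').1 hu') hv).not_ge
    · rfl)
  exact ⟨F, fun v hv => hF _ _ (.inl ⟨v, hv, rfl, rfl⟩)⟩

theorem exists_orderIso_extending_Iic_orderIso {x y : L} (f : Set.Iic x ≃o Set.Iic y)
    (hyx : y ≤ x) {c : Set.Iic x} (hc : (c : L) ≤ f c) :
    ∃ F : L ≃o L, ∀ v ≤ c, F v = f v := by
  let r : Set.Iic x → Set.Iic x := fun v => ⟨f v, (f v).2.trans hyx⟩
  have hr : ∀ {v w}, r v ≤ r w ↔ v ≤ w := f.le_iff_le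
  have horbit : Monotone fun n => r^[n] c :=
    Monotone.monotone_iterate_of_le_map (fun _ _ => hr.2) hc
  let W : LowerSet L := lowerClosure (Set.range fun n => (r^[n] c : L))
  have mem_W : ∀ {v}, v ∈ W ↔ ∃ n, v ≤ (r^[n] c : L) := by simp [W]
  have hWx : (W : Set L) ⊆ Set.Iic x := fun v hv => by
    obtain ⟨n, hn⟩ := mem_W.1 hv
    exact hn.trans (r^[n] c).2
  have hWy : (W : Set L) ⊆ Set.Iic y := fun v hv => by
    obtain ⟨n, hn⟩ := mem_W.1 hv
    have : v ≤ r^[n + 1] c := hn.trans (horbit n.le_succ)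
    rw [Function.iterate_succ_apply'] at this
    exact this.trans (f _).2
  have hfW : ∀ v : Set.Iic x, (v : L) ∈ W ↔ (f v : L) ∈ W := fun v => by
    rw [mem_W, mem_W]
    constructor <;> rintro ⟨n, hn⟩
    · refine ⟨n + 1, ?_⟩
      rw [Function.iterate_succ_apply']
      exact hr.2 hn
    · refine ⟨n, hr.1 ?_⟩
      rw [← Function.iterate_succ_apply' r]
      exact le_trans (b := r^[n] c) hn (horbit n.le_succ)
  obtain ⟨F, hF⟩ := exists_orderIso_extending_of_invariant_lowerSet f hWx hWy hfW
  exact ⟨F, fun v hv => hF v (mem_W.2 ⟨0, hv⟩)⟩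

theorem exists_monotone_cofinal_seq {P : Type*} [SemilatticeSup P] [Countable P] (g : P → P)
    (x₀ : P) : ∃ X : ℕ → P, X 0 = x₀ ∧ Monotone X ∧ (∀ n, g (X n) ≤ X (n + 1)) ∧
      ∀ v, ∃ n, v ≤ X n := by
  have : Nonempty P := ⟨x₀⟩
  obtain ⟨e, he⟩ := exists_surjective_nat P
  let X : ℕ → P := fun n => Nat.rec x₀ (fun n x => x ⊔ e n ⊔ g x) n
  have hX : ∀ n, X (n + 1) = X n ⊔ e n ⊔ g (X n) := fun _ => rfl
  refine ⟨X, rfl, monotone_nat_of_le_succ fun n => ?_, fun n => ?_, fun v => ?_⟩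
  · exact hX n ▸ le_sup_left.trans le_sup_left
  · exact hX n ▸ le_sup_right
  · obtain ⟨n, rfl⟩ := he v
    exact ⟨n + 1, hX n ▸ le_sup_right.trans le_sup_left⟩

theorem exists_orderIso_of_backAndForth [Countable L] [Countable M] {G : Set (Set (L × M))}
    (hle : ∀ R ∈ G, ∀ u ∈ R, ∀ v ∈ R, u.1 ≤ v.1 ↔ u.2 ≤ v.2)
    (forth : ∀ R ∈ G, ∀ c, ∃ R' ∈ G, R ⊆ R' ∧ ∃ d, (c, d) ∈ R')
    (back : ∀ R ∈ G, ∀ d, ∃ R' ∈ G, R ⊆ R' ∧ ∃ c, (c, d) ∈ R')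
    {R₀ : Set (L × M)} (hR₀ : R₀ ∈ G) :
    ∃ F : L ≃o M, ∀ u ∈ R₀, F u.1 = u.2 := by
  have := Encodable.ofCountable L
  have := Encodable.ofCountable M
  let D : L ⊕ M → Order.Cofinal G := Sum.elim
    (fun c => ⟨{R | ∃ d, (c, d) ∈ R.1}, fun R =>
      let ⟨R', hR', hsub, hc⟩ := forth R.1 R.2 c
      ⟨⟨R', hR'⟩, hc, hsub⟩⟩)
    (fun d => ⟨{R | ∃ c, (c, d) ∈ R.1}, fun R =>
      let ⟨R', hR', hsub, hd⟩ := back R.1 R.2 d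
      ⟨⟨R', hR'⟩, hd, hsub⟩⟩)
  let I := Order.idealOfCofinals (⟨R₀, hR₀⟩ : G) D
  obtain ⟨F, hF⟩ := exists_orderIso_of_biTotal (R := fun c d => ∃ R ∈ I, (c, d) ∈ R.1)
    ⟨fun c => by
      obtain ⟨R, ⟨d, hd⟩, hRI⟩ := Order.cofinal_meets_idealOfCofinals ⟨R₀, hR₀⟩ D (Sum.inl c)
      exact ⟨d, R, hRI, hd⟩,
    fun d => by
      obtain ⟨R, ⟨c, hc⟩, hRI⟩ := Order.cofinal_meets_idealOfCofinals ⟨R₀, hR₀⟩ D (Sum.inr d)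
      exact ⟨c, R, hRI, hc⟩⟩
    (by
      rintro c d c' d' ⟨R, hRI, hR⟩ ⟨R', hRI', hR'⟩
      obtain ⟨U, -, hU, hU'⟩ := I.directed R hRI R' hRI'
      exact hle U.1 U.2 _ (hU hR) _ (hU' hR'))
  exact ⟨F, fun u hu => hF _ _ ⟨_, Order.mem_idealOfCofinals _ D, hu⟩⟩

theorem exists_orderIso_of_backAndForth_tuples [Countable L] [Countable M]
    {Q : ∀ {n : ℕ}, (Fin n → L) → (Fin n → M) → Prop}
    (hle : ∀ {n} {p : Fin n → L} {q : Fin n → M}, Q p q → ∀ i j, p i ≤ p j ↔ q i ≤ q j)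
    (forth : ∀ {n} {p : Fin n → L} {q : Fin n → M}, Q p q →
      ∀ c, ∃ d, Q (Fin.snoc p c : Fin (n + 1) → L) (Fin.snoc q d : Fin (n + 1) → M))
    (back : ∀ {n} {p : Fin n → L} {q : Fin n → M}, Q p q →
      ∀ d, ∃ c, Q (Fin.snoc p c : Fin (n + 1) → L) (Fin.snoc q d : Fin (n + 1) → M))
    {k : ℕ} {a : Fin k → L} {b : Fin k → M} (hab : Q a b) :
    ∃ F : L ≃o M, ∀ i, F (a i) = b i := by
  let graph : ∀ {n : ℕ}, (Fin n → L) → (Fin n → M) → Set (L × M) := fun p q =>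
    Set.range fun i => (p i, q i)
  have graph_snoc : ∀ {n} (p : Fin n → L) (q : Fin n → M) c d,
      graph (Fin.snoc p c : Fin (n + 1) → L) (Fin.snoc q d : Fin (n + 1) → M) =
        insert (c, d) (graph p q) := fun p q c d => by
    ext u
    simp [graph, Fin.exists_fin_succ', or_comm, eq_comm]
  obtain ⟨F, hF⟩ := exists_orderIso_of_backAndForth
    (G := {R | ∃ n, ∃ (p : Fin n → L) (q : Fin n → M), Q p q ∧ R = graph p q})
    (by
      rintro _ ⟨n, p, q, hpq, rfl⟩ _ ⟨i, rfl⟩ _ ⟨j, rfl⟩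
      exact hle hpq i j)
    (by
      rintro _ ⟨n, p, q, hpq, rfl⟩ c
      obtain ⟨d, hd⟩ := forth hpq c
      exact ⟨_, ⟨_, _, _, hd, rfl⟩, by simp [graph_snoc], d, by simp [graph_snoc]⟩)
    (by
      rintro _ ⟨n, p, q, hpq, rfl⟩ d
      obtain ⟨c, hc⟩ := back hpq d
      exact ⟨_, ⟨_, _, _, hc, rfl⟩, by simp [graph_snoc], c, by simp [graph_snoc]⟩)
    ⟨k, a, b, hab, rfl⟩
  exact ⟨F, fun i => hF _ ⟨i, rfl⟩⟩

end OrderIso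

/-- An isomorphism `(L_{≤x}, a) ≅ (M_{≤y}, b)` of closed initial segments with named points. -/
structure IicIso {L M ι : Type*} [LinearOrder L] [LinearOrder M] (a : ι → L) (x : L)
    (b : ι → M) (y : M) where
  toOrderIso : Set.Iic x ≃o Set.Iic y
  left_le : ∀ i, a i ≤ x
  map_point : ∀ i, (toOrderIso ⟨a i, left_le i⟩ : M) = b i

namespace IicIso

variable {K L M ι : Type*} [LinearOrder K] [LinearOrder L] [LinearOrder M]
  {a : ι → L} {x : L} {b : ι → M} {y : M}

theorem right_le (f : IicIso a x b y) (i : ι) : b i ≤ y :=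
  f.map_point i ▸ (f.toOrderIso ⟨a i, f.left_le i⟩).2

protected def refl (h : ∀ i, a i ≤ x) : IicIso a x a x where
  toOrderIso := OrderIso.refl _
  left_le := h
  map_point _ := rfl

protected def symm (f : IicIso a x b y) : IicIso b y a x where
  toOrderIso := f.toOrderIso.symm
  left_le := f.right_le
  map_point i := by
    have h : (⟨b i, f.right_le i⟩ : Set.Iic y) = f.toOrderIso ⟨a i, f.left_le i⟩ :=
      Subtype.ext (f.map_point i).symm
    exact congrArg Subtype.val ((congrArg f.toOrderIso.symm h).trans
      (f.toOrderIso.symm_apply_apply _))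

protected def trans {c : ι → K} {z : K} (f : IicIso a x b y) (g : IicIso b y c z) :
    IicIso a x c z where
  toOrderIso := f.toOrderIso.trans g.toOrderIso
  left_le := f.left_le
  map_point i := by
    have h : f.toOrderIso ⟨a i, f.left_le i⟩ = ⟨b i, g.left_le i⟩ := Subtype.ext (f.map_point i)
    exact (congrArg (fun w => (g.toOrderIso w : K)) h).trans (g.map_point i)

/-- Restriction to the closed initial segment below `v`, which still contains all named points. -/
def restrict (f : IicIso a x b y) (v : Set.Iic x) (hv : ∀ i, a i ≤ v) :
    IicIso a (v : L) b (f.toOrderIso v) where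
  toOrderIso :=
    { toFun u := ⟨f.toOrderIso ⟨u, u.2.trans v.2⟩, f.toOrderIso.monotone u.2⟩
      invFun w := ⟨f.toOrderIso.symm ⟨w, w.2.trans (f.toOrderIso v).2⟩,
        f.toOrderIso.symm_apply_le.2 w.2⟩
      left_inv u := Subtype.ext
        (congrArg Subtype.val (f.toOrderIso.symm_apply_apply ⟨u, u.2.trans v.2⟩) :)
      right_inv w := Subtype.ext
        (congrArg Subtype.val (f.toOrderIso.apply_symm_apply ⟨w, w.2.trans (f.toOrderIso v).2⟩) :)
      map_rel_iff' := f.toOrderIso.le_iff_le }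
  left_le := hv
  map_point := f.map_point

end IicIso

section CopyHull

variable {K L M ι : Type*} [LinearOrder K] [LinearOrder L] [LinearOrder M]
  {c : ι → K} {z : K} {a : ι → L} {x : L} {b : ι → M} {y : M}

/-- The lower set generated by the points `x` of `L` that are copies of `z`, in the sense that
`(K_{≤z}, c) ≅ (L_{≤x}, a)`. -/
def copyHull (c : ι → K) (z : K) (a : ι → L) : LowerSet L :=
  lowerClosure {x | Nonempty (IicIso c z a x)}

theorem copyHull_subset_Iic (hx : ∀ w, IicIso c z a w → w ≤ x) :
    (copyHull c z a : Set L) ⊆ Set.Iic x := by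
  rintro v ⟨w, ⟨g⟩, hvw⟩
  exact hvw.trans (hx w g)

theorem IicIso.map_mem_copyHull (f : IicIso a x b y) (hx : ∀ w, IicIso c z a w → w ≤ x)
    {v : Set.Iic x} (hv : (v : L) ∈ copyHull c z a) : (f.toOrderIso v : M) ∈ copyHull c z b := by
  obtain ⟨w, ⟨g⟩, hvw⟩ := hv
  exact ⟨_, ⟨g.trans (f.restrict ⟨w, hx w g⟩ g.right_le)⟩, f.toOrderIso.monotone hvw⟩

theorem IicIso.map_mem_copyHull_iff (f : IicIso a x b y) (hx : ∀ w, IicIso c z a w → w ≤ x)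
    (hy : ∀ w, IicIso c z b w → w ≤ y) (v : Set.Iic x) :
    (v : L) ∈ copyHull c z a ↔ (f.toOrderIso v : M) ∈ copyHull c z b := by
  refine ⟨f.map_mem_copyHull hx, fun hv => ?_⟩
  have := f.symm.map_mem_copyHull hy hv
  rwa [IicIso.symm, OrderIso.symm_apply_apply] at this

end CopyHull

section CopyExtension

variable {L M ι : Type*} [LinearOrder L] [LinearOrder M]

theorem exists_orderIso_of_unbounded_copies {a b : ι → L} {x y : L} (f : IicIso a x b y)
    (hunb : ∀ u, ∃ v, u ≤ v ∧ Nonempty (IicIso a x a v)) {m : ι} (hm : ∀ i, a i ≤ a m)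
    (hab : a m ≤ b m) : ∃ F : L ≃o L, ∀ i, F (a i) = b i := by
  obtain ⟨v, hyv, ⟨g⟩⟩ := hunb y
  let r : IicIso a v b y := g.symm.trans f
  obtain ⟨F, hF⟩ := exists_orderIso_extending_Iic_orderIso r.toOrderIso hyv
    (c := ⟨a m, r.left_le m⟩) (hab.trans_eq (r.map_point m).symm)
  exact ⟨F, fun i => (hF ⟨a i, r.left_le i⟩ (hm i)).trans (r.map_point i)⟩

/-- Every `u` above `a` corresponds to some `u'` above `b` beyond which each point has a copy
beyond `u`. -/
def CopyTransfer (a : ι → L) (b : ι → M) : Prop :=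
  ∀ u, (∀ i, a i ≤ u) → ∃ u', Nonempty (IicIso a u b u') ∧
    ∀ v', u' ≤ v' → ∃ v, u ≤ v ∧ Nonempty (IicIso b v' a v)

theorem exists_orderIso_of_bounded_copies [Countable L] {a : ι → L} {b : ι → M} {x₀ : L}
    (hx₀ : ∀ i, a i ≤ x₀)
    (hbdd : ∀ x, (∀ i, a i ≤ x) → ∃ u, ∀ v, IicIso a x a v → v < u)
    (htransfer : CopyTransfer a b) : ∃ F : L ≃o M, ∀ i, F (a i) = b i := by
  choose! bound hbound using hbdd
  obtain ⟨X, hX₀, hXmono, hXbound, hXcof⟩ := exists_monotone_cofinal_seq bound x₀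
  have le_X (n i) : a i ≤ X n := (hx₀ i).trans (hX₀ ▸ hXmono n.zero_le)
  choose Y hf hY using fun n => htransfer (X (n + 1)) (le_X (n + 1))
  let f n : IicIso a (X (n + 1)) b (Y n) := (hf n).some
  have lt_X {z m n} (hz : ∀ i, a i ≤ z) (hzX : bound z ≤ X m) (hmn : m ≤ n) v
      (g : IicIso a z a v) : v < X n :=
    (hbound z hz v g).trans_le (hzX.trans (hXmono hmn))
  have lt_Y {z n} (hz : ∀ v, IicIso a z a v → v < X (n + 1)) w (g : IicIso a z b w) : w < Y n := by
    by_contra! hw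
    obtain ⟨v, hXv, ⟨g'⟩⟩ := hY n w hw
    exact (hz v (g.trans g')).not_ge hXv
  have copies_lt {m n} (hmn : m ≤ n) := lt_X (le_X m) (hXbound m) (Nat.succ_le_succ hmn)
  have hle {m n} (hmn : m ≤ n) w (g : IicIso a (X m) a w) := (copies_lt hmn w g).le
  have hle' {m n} (hmn : m ≤ n) w (g : IicIso a (X m) b w) := (lt_Y (copies_lt hmn) w g).le
  have exhausts (v : L) : ∃ n, v ∈ copyHull a (X n) a := by
    obtain ⟨n, hn⟩ := hXcof v
    exact ⟨n, X n, ⟨.refl (le_X n)⟩, hn⟩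
  have exhausts' (w : M) : ∃ n, w ∈ copyHull a (X n) b := by
    obtain ⟨u', -, hu'⟩ := htransfer x₀ hx₀
    obtain ⟨v, -, ⟨g⟩⟩ := hu' (max w u') (le_max_right w u')
    obtain ⟨n, hn⟩ := hXcof (bound v)
    have hlt := lt_Y (lt_X g.right_le hn n.le_succ) _ g.symm
    exact ⟨n + 1, Y n, hf n, (le_max_left w u').trans hlt.le⟩
  obtain ⟨F, hF⟩ := exists_orderIso_of_exhaustion (fun n => (f n).toOrderIso)
    (fun _ => copyHull_subset_Iic (hle le_rfl)) (fun _ => copyHull_subset_Iic (hle' le_rfl))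
    (fun _ n hmn => (f n).map_mem_copyHull_iff (hle hmn) (hle' hmn)) exhausts exhausts'
  refine ⟨F, fun i => ?_⟩
  obtain ⟨n, _, hn⟩ := hF (a i)
  exact hn.trans ((f n).map_point i)

end CopyExtension

namespace bfT

variable {L M : Type} [LinearOrder L] [LinearOrder M] {ξ γ : Ordinal} {k n : ℕ}
  {a : Fin k → L} {b : Fin k → M}

theorem le_iff (h : bfT ξ L M a b) (i j : Fin k) : a i ≤ a j ↔ b i ≤ b j := by
  rw [bfT] at h
  exact h.1 i j

theorem lt_iff (h : bfT ξ L M a b) (i j : Fin k) : a i < a j ↔ b i < b j := by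
  rw [← not_le, ← not_le, h.le_iff]

theorem exists_append (h : bfT ξ L M a b) (hγ : γ < ξ) (d : Fin n → M) :
    ∃ c : Fin n → L, bfT γ M L (Fin.append b d) (Fin.append a c) := by
  rw [bfT] at h
  exact h.2 γ hγ n d

theorem exists_snoc (h : bfT ξ L M a b) (hγ : γ < ξ) (d : M) :
    ∃ c : L, bfT γ M L (Fin.snoc b d : Fin (k + 1) → M) (Fin.snoc a c : Fin (k + 1) → L) := by
  obtain ⟨c, hc⟩ := h.exists_append hγ fun _ : Fin 1 => d
  rw [Fin.append_right_eq_snoc, Fin.append_right_eq_snoc] at hc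
  exact ⟨c 0, hc⟩

theorem mono (hγ : γ ≤ ξ) (h : bfT ξ L M a b) : bfT γ L M a b := by
  rw [bfT]
  exact ⟨h.le_iff, fun _ hδ _ => h.exists_append (hδ.trans_le hγ)⟩

theorem of_orderIso {L M : Type} [LinearOrder L] [LinearOrder M] (ξ : Ordinal) {k : ℕ}
    {a : Fin k → L} {b : Fin k → M} (f : L ≃o M) (hf : ∀ i, f (a i) = b i) : bfT ξ L M a b := by
  rw [bfT]
  refine ⟨fun i j => by rw [← hf, ← hf, f.le_iff_le], fun γ _ l d => ⟨f.symm ∘ d, ?_⟩⟩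
  exact of_orderIso γ f.symm ((Fin.forall_fin_add _).2 ⟨by simp [← hf], by simp⟩)
termination_by ξ

theorem trans {L M N : Type} [LinearOrder L] [LinearOrder M] [LinearOrder N] {ξ : Ordinal}
    {k : ℕ} {a : Fin k → L} {b : Fin k → M} {c : Fin k → N} (h : bfT ξ L M a b)
    (h' : bfT ξ M N b c) : bfT ξ L N a c := by
  rw [bfT]
  refine ⟨fun i j => (h.le_iff i j).trans (h'.le_iff i j), fun γ hγ l d => ?_⟩
  obtain ⟨e, he⟩ := h'.exists_append hγ d
  obtain ⟨e', he'⟩ := h.exists_append hγ e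
  exact ⟨e', he.trans he'⟩
termination_by ξ

theorem of_forall_exists {L M : Type} [LinearOrder L] [LinearOrder M] {ξ : Ordinal} {k n : ℕ}
    {a : Fin k → L} {b : Fin k → M} {p : Fin n → L} {q : Fin n → M} (h : bfT ξ L M a b)
    (hpq : ∀ s, ∃ t, a t = p s ∧ b t = q s) : bfT ξ L M p q := by
  rw [bfT]
  refine ⟨fun i j => ?_, fun γ hγ l d => ?_⟩
  · obtain ⟨i', hi, hi'⟩ := hpq i
    obtain ⟨j', hj, hj'⟩ := hpq j
    rw [← hi, ← hi', ← hj, ← hj', h.le_iff]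
  · obtain ⟨c, hc⟩ := h.exists_append hγ d
    refine ⟨c, hc.of_forall_exists ((Fin.forall_fin_add _).2 ⟨fun s => ?_, fun s => ?_⟩)⟩
    · obtain ⟨t, ht, ht'⟩ := hpq s
      exact ⟨Fin.castAdd l t, by simp [ht, ht']⟩
    · exact ⟨Fin.natAdd k s, by simp⟩
termination_by ξ

theorem restrict_Iio {L M : Type} [LinearOrder L] [LinearOrder M] {ξ : Ordinal} {k n : ℕ}
    {a : Fin k → L} {b : Fin k → M} {x : L} {y : M} {p : Fin n → Set.Iio x} {q : Fin n → Set.Iio y}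
    (h : bfT ξ L M a b) (hxy : ∃ t, a t = x ∧ b t = y)
    (hpq : ∀ s, ∃ t, a t = p s ∧ b t = q s) : bfT ξ (Set.Iio x) (Set.Iio y) p q := by
  rw [bfT]
  refine ⟨fun i j => ?_, fun γ hγ l d => ?_⟩
  · obtain ⟨i', hi, hi'⟩ := hpq i
    obtain ⟨j', hj, hj'⟩ := hpq j
    rw [← Subtype.coe_le_coe, ← Subtype.coe_le_coe, ← hi, ← hi', ← hj, ← hj', h.le_iff]
  · obtain ⟨c, hc⟩ := h.exists_append hγ fun s => (d s : M)
    obtain ⟨t, rfl, rfl⟩ := hxy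
    have hcx s : c s < a t := by
      have := (hc.lt_iff (Fin.natAdd k s) (Fin.castAdd l t)).1
      simp only [Fin.append_right, Fin.append_left] at this
      exact this (d s).2
    refine ⟨fun s => ⟨c s, hcx s⟩, hc.restrict_Iio ⟨Fin.castAdd l t, by simp⟩
      ((Fin.forall_fin_add _).2 ⟨fun s => ?_, fun s => ?_⟩)⟩
    · obtain ⟨t', ht, ht'⟩ := hpq s
      exact ⟨Fin.castAdd l t', by simp [ht, ht']⟩
    · exact ⟨Fin.natAdd k s, by simp⟩
termination_by ξ

theorem symm_of_lt (h : bfT ξ L M a b) (hγ : γ < ξ) : bfT γ M L b a := by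
  obtain ⟨c, hc⟩ := h.exists_append hγ (Fin.elim0 : Fin 0 → M)
  exact hc.of_forall_exists fun s => ⟨Fin.castAdd 0 s, Fin.append_left _ _ s, Fin.append_left _ _ s⟩

theorem exists_of_lt (h : bfT ξ L M a b) (hγ : γ < ξ) (q : Fin n → M) :
    ∃ p : Fin n → L, bfT γ M L q p := by
  obtain ⟨p, hp⟩ := h.exists_append hγ q
  exact ⟨p, hp.of_forall_exists fun s => ⟨Fin.natAdd k s, by simp⟩⟩

end bfT

section Rank

universe u

variable {L M : Type} [LinearOrder L] [LinearOrder M] {k : ℕ} {a : Fin k → L} {b : Fin k → M}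

theorem exists_forall_bfT_of_bfT (L M : Type) [LinearOrder L] [LinearOrder M] :
    ∃ β : Ordinal.{u}, ∀ {n} {p : Fin n → L} {q : Fin n → M}, bfT β L M p q →
      ∀ γ : Ordinal.{u}, bfT γ L M p q := by
  let failure : (Σ n, (Fin n → L) × (Fin n → M)) → Ordinal.{u} := fun z =>
    sInf {γ | ¬ bfT γ L M z.2.1 z.2.2}
  refine ⟨⨆ z, failure z, fun {n p q} hpq => ?_⟩
  by_contra! hne
  exact csInf_mem (s := {γ | ¬ bfT γ L M p q}) hne
    (hpq.mono (Ordinal.le_iSup failure ⟨n, p, q⟩))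

theorem exists_orderIso_of_forall_bfT [Countable L] [Countable M]
    (h : ∀ γ : Ordinal.{u}, bfT γ L M a b) : ∃ F : L ≃o M, ∀ i, F (a i) = b i := by
  obtain ⟨β, hβ⟩ := exists_forall_bfT_of_bfT.{u} L M
  refine exists_orderIso_of_backAndForth_tuples
    (Q := fun p q => ∀ γ : Ordinal.{u}, bfT γ L M p q) (fun h => (h 0).le_iff)
    (fun h c => ?_) (fun h d => ?_) h
  · obtain ⟨d, hd⟩ := ((h (β + 1 + 1)).symm_of_lt (lt_add_one _)).exists_snoc (lt_add_one β) c
    exact ⟨d, hβ hd⟩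
  · obtain ⟨c, hc⟩ := (h (β + 1 + 1)).exists_snoc (lt_add_one _) d
    exact ⟨c, hβ (hc.symm_of_lt (lt_add_one β))⟩

theorem exists_orderIso_of_bfT_rk [Countable L] {b : Fin k → L} (h : bfT (rk L a) L L a b) :
    ∃ F : L ≃o L, ∀ i, F (a i) = b i := by
  obtain ⟨β, hβ⟩ := exists_forall_bfT_of_bfT L L
  exact csInf_mem (s := {ξ | ∀ b, bfT ξ L L a b → ∃ F : L ≃o L, ∀ i, F (a i) = b i})
    ⟨β, fun _ hb => exists_orderIso_of_forall_bfT (hβ hb)⟩ b h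

theorem rk_lt_scottRank (a : Fin k → L) : rk.{u} L a < scottRank.{u} L := by
  have hne : {ξ : Ordinal.{u} | ∀ (k : ℕ) (a : Fin k → L), rk L a < ξ}.Nonempty :=
    ⟨Order.succ (⨆ z : Σ k, Fin k → L, rk L z.2), fun k a => Order.lt_succ_iff.2
      (Ordinal.le_iSup (fun z : Σ k, Fin k → L => rk.{u} L z.2) ⟨k, a⟩)⟩
  exact csInf_mem hne k a

theorem exists_orderIso_of_bfT [Countable L] [Countable M] {ξ : Ordinal} (hξ : scottRank L < ξ)
    (h : bfT ξ L M a b) : ∃ F : L ≃o M, ∀ i, F (a i) = b i := by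
  have match_orbit {n} {p p' : Fin n → L} {q : Fin n → M} (hpq : bfT (rk L p) L M p q)
      (hqp' : bfT (scottRank L) M L q p') : ∃ F : L ≃o L, ∀ i, F (p' i) = p i := by
    obtain ⟨F, hF⟩ := exists_orderIso_of_bfT_rk
      (hpq.trans (hqp'.mono (rk_lt_scottRank p).le))
    exact ⟨F.symm, fun i => F.symm_apply_eq.2 (hF i).symm⟩
  refine exists_orderIso_of_backAndForth_tuples (Q := fun p q => bfT (scottRank L) M L q p)
    (fun hqp i j => (hqp.le_iff i j).symm) (fun {n p q} hqp c => ?_) (fun {n p q} hqp d => ?_)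
    (h.symm_of_lt hξ)
  · obtain ⟨d, hd⟩ := hqp.exists_snoc (rk_lt_scottRank _) c
    obtain ⟨p', hp'⟩ := h.exists_of_lt hξ (Fin.snoc q d : Fin (n + 1) → M)
    obtain ⟨F, hF⟩ := match_orbit hd hp'
    exact ⟨d, hp'.trans (.of_orderIso _ F hF)⟩
  · obtain ⟨p', hp'⟩ := h.exists_of_lt hξ (Fin.snoc q d : Fin (n + 1) → M)
    have hinit : bfT (scottRank L) M L q (Fin.init p') :=
      hp'.of_forall_exists fun s => ⟨s.castSucc, by simp, rfl⟩
    obtain ⟨F, hF⟩ := match_orbit (hqp.symm_of_lt (rk_lt_scottRank p)) hinit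
    exact ⟨F (p' (Fin.last n)), hp'.trans (.of_orderIso _ F
      (Fin.forall_fin_succ'.2 ⟨fun i => (hF i).trans (by simp), by simp⟩))⟩

end Rank

section InitialSegments

variable {L M : Type} [LinearOrder L] [LinearOrder M] [Countable L] {k : ℕ}
  {a : Fin k → L} {b : Fin k → M} {α : Ordinal}

theorem bfT.nonempty_iicIso [Countable M] {x : L} {y : M} (hx : scottRank (Set.Iio x) < α)
    (h : bfT α L M (Fin.snoc a x : Fin (k + 1) → L) (Fin.snoc b y : Fin (k + 1) → M))
    (hax : ∀ i, a i ≤ x) : Nonempty (IicIso a x b y) := by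
  have le_iff i : x ≤ a i ↔ y ≤ b i := by simpa using h.le_iff (Fin.last k) i.castSucc
  have hby i : b i ≤ y := by simpa [hax i] using h.le_iff i.castSucc (Fin.last k)
  obtain ⟨n, ⟨e⟩⟩ := Finite.exists_equiv_fin {i // a i < x}
  let p : Fin n → Set.Iio x := fun s => ⟨a (e.symm s), (e.symm s).2⟩
  let q : Fin n → Set.Iio y := fun s =>
    ⟨b (e.symm s), (lt_iff_lt_of_le_iff_le (le_iff _)).1 (e.symm s).2⟩
  have hpq : bfT α (Set.Iio x) (Set.Iio y) p q :=
    h.restrict_Iio ⟨Fin.last k, by simp⟩ fun s => ⟨(e.symm s).1.castSucc, by simp [p, q]⟩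
  obtain ⟨f, hf⟩ := exists_orderIso_of_bfT hx hpq
  obtain ⟨F, hFx, hF⟩ := exists_orderIso_Iic_of_Iio f
  refine ⟨⟨F, hax, fun i => ?_⟩⟩
  rcases (hax i).lt_or_eq with hi | hi
  · calc (F ⟨a i, hax i⟩ : M) = f (p (e ⟨i, hi⟩)) := by simp [p, ← hF]
      _ = b i := by simp [hf, q]
  · calc (F ⟨a i, hax i⟩ : M) = y := by simp only [hi, hFx]
      _ = b i := ((le_iff i).1 hi.ge).antisymm (hby i)

theorem bfT.copyTransfer [Countable M] (hL : ∀ x : L, scottRank (Set.Iio x) < α)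
    (hM : ∀ y : M, scottRank (Set.Iio y) < α) (h : bfT (α + 1 + 1) M L b a) :
    CopyTransfer a b := by
  intro u hu
  obtain ⟨u', hu'⟩ := h.exists_snoc (lt_add_one _) u
  obtain ⟨f⟩ := (hu'.mono le_self_add).nonempty_iicIso (hL u) hu
  refine ⟨u', ⟨f⟩, fun v' hv' => ?_⟩
  obtain ⟨v, hv⟩ := hu'.exists_snoc (lt_add_one α) v'
  refine ⟨v, ?_, bfT.nonempty_iicIso (hM v') (hv.of_forall_exists ?_)
    fun i => (f.right_le i).trans hv'⟩
  · simpa [hv'] using hv.le_iff (Fin.last k).castSucc (Fin.last (k + 1))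
  · exact Fin.forall_fin_succ'.2
      ⟨fun i => ⟨i.castSucc.castSucc, by simp⟩, ⟨Fin.last (k + 1), by simp⟩⟩

theorem bfT.exists_orderIso_of_max_le {b : Fin k → L} (hα : ∀ x : L, scottRank (Set.Iio x) < α)
    (h : bfT (α + 1 + 1) L L b a) {m : Fin k} (hm : ∀ i, a i ≤ a m) (hab : a m ≤ b m) :
    ∃ F : L ≃o L, ∀ i, F (a i) = b i := by
  have htransfer : CopyTransfer a b := h.copyTransfer hα hα
  by_cases! hbdd : ∀ x, (∀ i, a i ≤ x) → ∃ u, ∀ v, IicIso a x a v → v < u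
  · exact exists_orderIso_of_bounded_copies hm hbdd htransfer
  · obtain ⟨x, hx, hunb⟩ := hbdd
    obtain ⟨y, ⟨f⟩, -⟩ := htransfer x hx
    exact exists_orderIso_of_unbounded_copies f
      (fun u => (hunb u).imp fun _ ⟨g, hle⟩ => ⟨hle, ⟨g⟩⟩) hm hab

end InitialSegments

/-- If every proper initial segment `L_{<x}` of a countable linear order `L` has Scott
rank `< α`, then `SR L ≤ α + 4`. -/
theorem scottRank_of_initialSegments (L : Type) [LinearOrder L] [Countable L]
    (α : Ordinal) (h : ∀ x : L, scottRank ↥(Set.Iio x) < α) :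
    scottRank L ≤ α + 4 := by
  have h₂ : α + 1 + 1 < α + 3 := by rw [add_assoc]; gcongr; norm_num
  have h₃ : α + 3 < α + 4 := by gcongr; norm_num
  refine csInf_le' fun k a => (csInf_le' fun b hb => ?_).trans_lt h₃
  rcases isEmpty_or_nonempty (Fin k) with _ | _
  · exact ⟨OrderIso.refl L, isEmptyElim⟩
  obtain ⟨m, hm⟩ := Finite.exists_max a
  rcases le_total (a m) (b m) with hab | hba
  · exact (hb.symm_of_lt h₂).exists_orderIso_of_max_le h hm hab
  · have hm' i : b i ≤ b m := (hb.le_iff i m).1 (hm i)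
    obtain ⟨F, hF⟩ := (hb.mono h₂.le).exists_orderIso_of_max_le h hm' hba
    exact ⟨F.symm, fun i => F.symm_apply_eq.2 (hF i).symm⟩
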